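/- Under the standing assumptions of Section 4 of the paper, for any modules (V, v) and (W, w) over the semigroup A, with s := (1⊗ε⊗1)∘(1⊗μ⊗1)∘(τ̄_V⊗τ_W) : V⊗W → V⊗W, the following hold as morphisms A⊗A⊗V⊗W → V⊗W: (i) s∘(v⊗w)∘(1⊗c⊗1) = (v⊗w)∘(1⊗c⊗1)∘(e₁⊗1⊗1); and (ii) (v⊗w)∘(1⊗c⊗1)∘(1⊗1⊗s) = (v⊗w)∘(1⊗c⊗1)∘(e₂⊗1⊗1), where the middle braiding c : A⊗V → V⊗A interchanges the second A factor with V. -/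

import Mathlib

/-!
The left `L`-action on `A` induced by `τ` is `n₁`, and `(1 ⊗ n₁) ∘ (τ̄ ⊗ 1) = e₁`. The coactions on
`V` and `W` are induced by `τ̄` and `τ` on the acting copies of `A`, so `s` can be pulled back along
the actions and becomes `(1 ⊗ n₁) ∘ (τ̄ ⊗ 1)` on `A ⊗ A`: this is (i). For (ii), precompose with the
epimorphism `A ⊗ A ⊗ V ⊗ W ⟶ V ⊗ W` on the last two factors; by (i) and associativity the claim
reduces to the compatibility of `e₁` with `e₂`.

The formula for `e₁` rests on `t₄` commuting with `e₁` on adjacent legs. Multiply the common leg on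
the right by a further copy of `A`: relation (c14) trades `t₄` for `t₁`, where the required identity
is Axiom VI, and non-degeneracy cancels the extra factor.
-/

open CategoryTheory Category MonoidalCategory Limits

universe v u

namespace WeakMultiplierBimonoid

variable {C : Type u} [Category.{v} C] [MonoidalCategory C] [BraidedCategory C]

def wl {A : C} (f : A ⊗ A ⟶ A ⊗ A) : A ⊗ (A ⊗ A) ⟶ A ⊗ (A ⊗ A) :=
  (α_ A A A).inv ≫ (f ▷ A) ≫ (α_ A A A).hom

def ml {A : C} (f : A ⊗ A ⟶ A) : A ⊗ (A ⊗ A) ⟶ A ⊗ A :=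
  (α_ A A A).inv ≫ (f ▷ A)

def NdLeftOn {Z V W : C} (v : Z ⊗ V ⟶ W) (𝒴 : Set C) : Prop :=
  ∀ (X : C), ∀ Y ∈ 𝒴, Function.Injective
    (fun g : X ⟶ V ⊗ Y => (Z ◁ g) ≫ (α_ Z V Y).inv ≫ (v ▷ Y))

def NdRightOn {Z V W : C} (v : Z ⊗ V ⟶ W) (𝒴 : Set C) : Prop :=
  NdLeftOn ((β_ V Z).hom ≫ v) 𝒴

/-- The "middle braiding" `1 ⊗ c ⊗ 1 : A⁴ ⟶ A⁴` on `(A ⊗ A) ⊗ (A ⊗ A)`. -/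
def midSw (A : C) : (A ⊗ A) ⊗ (A ⊗ A) ⟶ (A ⊗ A) ⊗ (A ⊗ A) :=
  (α_ A A (A ⊗ A)).hom ≫ (A ◁ (α_ A A A).inv) ≫ (A ◁ ((β_ A A).hom ▷ A)) ≫
    (A ◁ (α_ A A A).hom) ≫ (α_ A A (A ⊗ A)).inv

/-- A regular weak multiplier bimonoid on an object `A` of a braided monoidal category,
with multiplication non-degenerate with respect to the class `𝒴`
(Definition 2.9 of the paper). -/
structure RWMB (A : C) (𝒴 : Set C) where
  t₁ : A ⊗ A ⟶ A ⊗ A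
  t₂ : A ⊗ A ⟶ A ⊗ A
  t₃ : A ⊗ A ⟶ A ⊗ A
  t₄ : A ⊗ A ⟶ A ⊗ A
  e₁ : A ⊗ A ⟶ A ⊗ A
  e₂ : A ⊗ A ⟶ A ⊗ A
  j : A ⟶ 𝟙_ C
  /-- the induced multiplication -/
  m : A ⊗ A ⟶ A
  /-- counit condition (m1); in particular `m` is the induced multiplication -/
  hm₁ : m = t₁ ≫ (j ▷ A) ≫ (λ_ A).hom
  /-- counit condition (m2) -/
  hm₂ : m = t₂ ≫ (A ◁ j) ≫ (ρ_ A).hom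
  /-- counit condition (m3) -/
  hm₃ : m = (β_ A A).hom ≫ t₃ ≫ (j ▷ A) ≫ (λ_ A).hom
  /-- counit condition (m4) -/
  hm₄ : m = (β_ A A).hom ≫ t₄ ≫ (A ◁ j) ≫ (ρ_ A).hom
  /-- the class `𝒴` contains the monoidal unit -/
  memI : (𝟙_ C) ∈ 𝒴
  memA : A ∈ 𝒴
  memAA : (A ⊗ A) ∈ 𝒴
  /-- `m` is non-degenerate on the left with respect to `𝒴` -/
  ndl : NdLeftOn m 𝒴
  /-- `m` is non-degenerate on the right with respect to `𝒴` -/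
  ndr : NdRightOn m 𝒴
  /-- relation (c12) -/
  hc12 : (A ◁ t₁) ≫ ml m = wl t₂ ≫ (A ◁ m)
  /-- relation (c13) -/
  hc13 : wl t₁ ≫ (A ◁ (β_ A A).hom) ≫ (A ◁ m)
    = (A ◁ (β_ A A).hom) ≫ wl t₃ ≫ (A ◁ m)
  /-- relation (c14) -/
  hc14 : (A ◁ t₁) ≫ wl (β_ A A).hom ≫ ml m = wl t₄ ≫ (A ◁ m)
  /-- relation (c23) -/
  hc23 : wl t₂ ≫ (A ◁ (β_ A A).hom) ≫ (A ◁ m) = (A ◁ t₃) ≫ ml m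
  /-- relation (c24) -/
  hc24 : (A ◁ t₂) ≫ wl (β_ A A).hom ≫ ml m = wl (β_ A A).hom ≫ (A ◁ t₄) ≫ ml m
  /-- relation (c34) -/
  hc34 : (A ◁ t₃) ≫ wl (β_ A A).hom ≫ ml m = wl t₄ ≫ (A ◁ (β_ A A).hom) ≫ (A ◁ m)
  /-- interchange relation for `(t₂, t₁)` -/
  hi21 : (A ◁ t₁) ≫ wl t₂ = wl t₂ ≫ (A ◁ t₁)
  /-- interchange relation for `(t₄, t₁)` -/
  hi41 : (A ◁ t₁) ≫ wl t₄ = wl t₄ ≫ (A ◁ t₁)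
  /-- interchange relation for `(t₂, t₃)` -/
  hi23 : (A ◁ t₃) ≫ wl t₂ = wl t₂ ≫ (A ◁ t₃)
  /-- interchange relation for `(t₄, t₃)` -/
  hi43 : (A ◁ t₃) ≫ wl t₄ = wl t₄ ≫ (A ◁ t₃)
  /-- compatibility of the idempotents `e₁`, `e₂`:
  `(m ⊗ m) ∘ (1 ⊗ c ⊗ 1) ∘ (1 ⊗ 1 ⊗ e₁) = (m ⊗ m) ∘ (1 ⊗ c ⊗ 1) ∘ (e₂ ⊗ 1 ⊗ 1)` -/
  hecomp : ((A ⊗ A) ◁ e₁) ≫ midSw A ≫ (m ▷ (A ⊗ A)) ≫ (A ◁ m)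
    = (e₂ ▷ (A ⊗ A)) ≫ midSw A ≫ (m ▷ (A ⊗ A)) ≫ (A ◁ m)
  /-- Axiom I for the weakly counital fusion morphism `(t₁, e₁, j)` -/
  ax1 : (A ◁ t₁) ≫ wl (β_ A A).hom ≫ (A ◁ t₁) ≫ wl (β_ A A).inv ≫ wl t₁
    = wl t₁ ≫ (A ◁ t₁)
  /-- Axiom II -/
  ax2 : e₁ ≫ e₁ = e₁
  /-- Axiom III -/
  ax3 : t₁ ≫ e₁ = t₁
  /-- Axiom IV -/
  ax4 : (A ◁ e₁) ≫ (A ◁ (β_ A A).inv) ≫ wl t₁ ≫ (A ◁ (β_ A A).hom) ≫ ml m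
    = (A ◁ (β_ A A).inv) ≫ wl t₁ ≫ (A ◁ (β_ A A).hom) ≫ ml m
  /-- Axiom V -/
  ax5 : (A ◁ t₁) ≫ wl e₁ = wl e₁ ≫ (A ◁ t₁)
  /-- Axiom VI -/
  ax6 : wl t₁ ≫ (A ◁ e₁)
    = (A ◁ (β_ A A).inv) ≫ wl e₁ ≫ (A ◁ (β_ A A).hom) ≫ wl t₁
  /-- Axiom VII -/
  ax7 : wl t₁ ≫ (A ◁ ((j ▷ A) ≫ (λ_ A).hom)) ≫ m
    = (A ◁ (β_ A A).hom) ≫ (A ◁ e₁) ≫ (A ◁ ((A ◁ j) ≫ (ρ_ A).hom)) ≫ m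
  /-- Axiom VIII -/
  ax8 : wl t₁ ≫ (A ◁ (β_ A A).hom) ≫ ml m ≫ (j ▷ A) ≫ (λ_ A).hom
    = (A ◁ (β_ A A).hom) ≫ (A ◁ e₁) ≫ (A ◁ ((j ▷ A) ≫ (λ_ A).hom)) ≫ m

namespace RWMB

variable {A : C} {𝒴 : Set C} (S : RWMB A 𝒴)

/-- `⊓ᴸ₁ := (j ⊗ 1) ∘ e₁`. -/
def piL1 : A ⊗ A ⟶ A := S.e₁ ≫ (S.j ▷ A) ≫ (λ_ A).hom

/-- `⊓ᴸ₂ := (j ⊗ 1) ∘ t₄ ∘ c`. -/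
def piL2 : A ⊗ A ⟶ A := (β_ A A).hom ≫ S.t₄ ≫ (S.j ▷ A) ≫ (λ_ A).hom

/-- `⊓̄ᴿ₁ ∘ c⁻¹ = (1 ⊗ j) ∘ e₁`, the second leg of the coequalizer defining the base
object. -/
def piBarR1c : A ⊗ A ⟶ A := S.e₁ ≫ (A ◁ S.j) ≫ (ρ_ A).hom

end RWMB


/-- A module over the semigroup `(A, m)`, relative to the class `𝒴`: an object of `𝒴`
with an associative action which is a regular epimorphism and non-degenerate on the
left with respect to `𝒴`. -/
structure AModule (A : C) (m : A ⊗ A ⟶ A) (𝒴 : Set C) where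
  V : C
  mem : V ∈ 𝒴
  act : A ⊗ V ⟶ V
  assoc : (A ◁ act) ≫ act = (α_ A A V).inv ≫ (m ▷ V) ≫ act
  regEpi : Nonempty (RegularEpi act)
  nd : NdLeftOn act 𝒴

/-- The canonical idempotent
`s := (1 ⊗ ε ⊗ 1) ∘ (1 ⊗ μ ⊗ 1) ∘ (τ̄_V ⊗ τ_W) : V ⊗ W ⟶ V ⊗ W`. -/
def sIdem {L : C} (μ : L ⊗ L ⟶ L) (ε : L ⟶ 𝟙_ C) {V W : C}
    (τbV : V ⟶ V ⊗ L) (τW : W ⟶ L ⊗ W) : V ⊗ W ⟶ V ⊗ W :=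
  (τbV ▷ W) ≫ ((V ⊗ L) ◁ τW) ≫ (α_ V L (L ⊗ W)).hom ≫ (V ◁ (α_ L L W).inv) ≫
    (V ◁ (μ ▷ W)) ≫ (V ◁ (ε ▷ W)) ≫ (V ◁ (λ_ W).hom)

/-- `(v ⊗ w) ∘ (1 ⊗ c ⊗ 1) : (A ⊗ A) ⊗ (V ⊗ W) ⟶ V ⊗ W`, where the middle braiding
`c : A ⊗ V ⟶ V ⊗ A` interchanges the second `A` factor with `V`. -/
def actPair {A V W : C} (v : A ⊗ V ⟶ V) (w : A ⊗ W ⟶ W) :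
    (A ⊗ A) ⊗ (V ⊗ W) ⟶ V ⊗ W :=
  (α_ A A (V ⊗ W)).hom ≫ (A ◁ (α_ A V W).inv) ≫ (A ◁ ((β_ A V).hom ▷ W)) ≫
    (A ◁ (α_ V A W).hom) ≫ (α_ A V (A ⊗ W)).inv ≫ (v ▷ (A ⊗ W)) ≫ (V ◁ w)

section RegularEpi

variable {D : Type*} [Category D]

theorem isRegularEpi_of_existsUnique {X Y Z : D} {f g : X ⟶ Y} {p : Y ⟶ Z} (w : f ≫ p = g ≫ p)
    (hp : ∀ {T : D} (h : Y ⟶ T), f ≫ h = g ≫ h → ∃! k : Z ⟶ T, p ≫ k = h) : IsRegularEpi p :=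
  ⟨⟨⟨_, f, g, w, Cofork.IsColimit.ofExistsUnique fun s => hp s.π s.condition⟩⟩⟩

theorem isRegularEpi_map {E : Type*} [Category E] (F : D ⥤ E)
    [PreservesColimitsOfShape WalkingParallelPair F] {X Y : D} (f : X ⟶ Y) [IsRegularEpi f] :
    IsRegularEpi (F.map f) :=
  ⟨⟨⟨_, _, _, _, isColimitCoforkMapOfIsColimit F _ (IsRegularEpi.isColimit f)⟩⟩⟩

variable [MonoidalCategory D] {X Y : D}

instance isRegularEpi_whiskerLeft
    [∀ Z : D, PreservesColimitsOfShape WalkingParallelPair (tensorLeft Z)] (Z : D)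
    (f : X ⟶ Y) [IsRegularEpi f] : IsRegularEpi (Z ◁ f) :=
  isRegularEpi_map (tensorLeft Z) f

instance isRegularEpi_whiskerRight
    [∀ Z : D, PreservesColimitsOfShape WalkingParallelPair (tensorRight Z)]
    (f : X ⟶ Y) [IsRegularEpi f] (Z : D) : IsRegularEpi (f ▷ Z) :=
  isRegularEpi_map (tensorRight Z) f

end RegularEpi

section Monoidal

variable {D : Type*} [Category D] [MonoidalCategory D]

theorem NdLeftOn.cancel {Z V W X : D} {v : Z ⊗ V ⟶ W} {𝒴 : Set D} (hv : NdLeftOn v 𝒴)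
    (hI : 𝟙_ D ∈ 𝒴) {f g : X ⟶ V} (h : Z ◁ f ≫ v = Z ◁ g ≫ v) : f = g := by
  have act_unit (k : X ⟶ V) :
      Z ◁ (k ≫ (ρ_ V).inv) ≫ (α_ Z V (𝟙_ D)).inv ≫ v ▷ 𝟙_ D = (Z ◁ k ≫ v) ≫ (ρ_ W).inv := by
    monoidal
  refine (cancel_mono (ρ_ V).inv).1 (hv X _ hI ?_)
  simp only [act_unit, h]

variable {A : D}

theorem wl_comp (f g : A ⊗ A ⟶ A ⊗ A) : wl (f ≫ g) = wl f ≫ wl g := by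
  simp [wl]

theorem ml_comp (f : A ⊗ A ⟶ A ⊗ A) (g : A ⊗ A ⟶ A) : ml (f ≫ g) = wl f ≫ ml g := by
  simp [wl, ml]

theorem wl_comp_counit_left (f : A ⊗ A ⟶ A ⊗ A) (j : A ⟶ 𝟙_ D) :
    wl f ≫ j ▷ (A ⊗ A) ≫ (λ_ (A ⊗ A)).hom = ml (f ≫ j ▷ A ≫ (λ_ A).hom) := by
  simp only [wl, ml]
  monoidal

theorem wl_comp_counit_middle (f : A ⊗ A ⟶ A ⊗ A) (j : A ⟶ 𝟙_ D) :
    wl f ≫ A ◁ (j ▷ A ≫ (λ_ A).hom) = ml (f ≫ A ◁ j ≫ (ρ_ A).hom) := by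
  simp only [wl, ml]
  monoidal

theorem whiskerLeft_comp_counit_left (j : A ⟶ 𝟙_ D) {X Y : D} (f : X ⟶ Y) :
    A ◁ f ≫ j ▷ Y ≫ (λ_ Y).hom = j ▷ X ≫ (λ_ X).hom ≫ f := by
  rw [whisker_exchange_assoc, leftUnitor_naturality]

end Monoidal

theorem NdRightOn.cancel {Z V W X Y : C} {v : Z ⊗ V ⟶ W} {𝒴 : Set C} (hv : NdRightOn v 𝒴)
    (hY : Y ∈ 𝒴) {f g : X ⟶ Y ⊗ Z}
    (h : f ▷ V ≫ (α_ Y Z V).hom ≫ Y ◁ v = g ▷ V ≫ (α_ Y Z V).hom ≫ Y ◁ v) : f = g := by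
  have act_braid (k : X ⟶ Y ⊗ Z) :
      V ◁ (k ≫ (β_ Z Y).inv) ≫ (α_ V Z Y).inv ≫ ((β_ V Z).hom ≫ v) ▷ Y =
        (β_ V X).hom ≫ (k ▷ V ≫ (α_ Y Z V).hom ≫ Y ◁ v) ≫ (β_ W Y).inv := by
    have hexagon : (α_ V Z Y).inv ≫ (β_ V Z).hom ▷ Y =
        (β_ V (Z ⊗ Y)).hom ≫ (α_ Z Y V).hom ≫ Z ◁ (β_ V Y).inv ≫ (α_ Z V Y).inv := by
      simp [BraidedCategory.braiding_tensor_right_hom]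
    rw [comp_whiskerRight, reassoc_of% hexagon,
      BraidedCategory.braiding_naturality_right_assoc]
    simp [BraidedCategory.braiding_inv_naturality_right,
      BraidedCategory.braiding_tensor_left_inv]
  refine (cancel_mono (β_ Z Y).inv).1 (hv X Y hY ?_)
  simp only [act_braid, h]

-- The middle leg is multiplied on the right by `V`, which reaches it by braiding past the third.
theorem NdRightOn.cancel_middle {Z V W X Y Y' : C} {v : Z ⊗ V ⟶ W} {𝒴 : Set C}
    (hv : NdRightOn v 𝒴) (hY : Y ⊗ Y' ∈ 𝒴) {f g : X ⟶ Y ⊗ (Z ⊗ Y')}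
    (h : f ▷ V ⊗≫ (Y ⊗ Z) ◁ (β_ Y' V).hom ⊗≫ Y ◁ v ▷ Y' =
      g ▷ V ⊗≫ (Y ⊗ Z) ◁ (β_ Y' V).hom ⊗≫ Y ◁ v ▷ Y') : f = g := by
  have braid_act : (β_ Y' Z).inv ▷ V ⊗≫ Y' ◁ v =
      𝟙 _ ⊗≫ Z ◁ (β_ Y' V).hom ⊗≫ v ▷ Y' ≫ (β_ Y' W).inv := by
    rw [BraidedCategory.braiding_inv_naturality_left, BraidedCategory.braiding_tensor_right_inv]
    simp [monoidalComp]
  have act_braid (k : X ⟶ Y ⊗ (Z ⊗ Y')) :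
      (k ≫ Y ◁ (β_ Y' Z).inv ≫ (α_ Y Y' Z).inv) ▷ V ≫ (α_ (Y ⊗ Y') Z V).hom ≫ (Y ⊗ Y') ◁ v =
        (k ▷ V ⊗≫ (Y ⊗ Z) ◁ (β_ Y' V).hom ⊗≫ Y ◁ v ▷ Y') ⊗≫ Y ◁ (β_ Y' W).inv ⊗≫ 𝟙 _ := by
    calc
      _ = k ▷ V ⊗≫ Y ◁ ((β_ Y' Z).inv ▷ V ⊗≫ Y' ◁ v) ⊗≫ 𝟙 _ := by monoidal
      _ = _ := by rw [braid_act]; monoidal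
  refine (cancel_mono (Y ◁ (β_ Y' Z).inv ≫ (α_ Y Y' Z).inv)).1 (hv.cancel hY ?_)
  simp only [act_braid, h]

theorem braiding_conj_wl {A : C} (f : A ⊗ A ⟶ A ⊗ A) :
    A ◁ (β_ A A).inv ≫ wl f ≫ A ◁ (β_ A A).hom =
      wl (β_ A A).hom ≫ A ◁ f ≫ wl (β_ A A).inv := by
  have naturality := BraidedCategory.braiding_naturality_left f A
  rw [BraidedCategory.braiding_tensor_left_hom] at naturality
  simp only [wl]
  simpa using (A ◁ (β_ A A).inv ≫ (α_ A A A).inv) ≫= naturality =≫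
    ((α_ A A A).inv ≫ (β_ A A).inv ▷ A ≫ (α_ A A A).hom)

namespace RWMB

variable {A : C} {𝒴 : Set C} (S : RWMB A 𝒴)

theorem t₁_comp_piL1 : S.t₁ ≫ S.piL1 = S.m := by
  rw [piL1, ← assoc, S.ax3, ← S.hm₁]

theorem whiskerLeft_piL1_comp_m :
    A ◁ S.piL1 ≫ S.m =
      wl (β_ A A).hom ≫ A ◁ S.t₁ ≫ wl (β_ A A).inv ≫ ml S.m ≫ S.j ▷ A ≫ (λ_ A).hom := by
  calc
    _ = A ◁ (β_ A A).inv ≫ A ◁ (β_ A A).hom ≫ A ◁ S.e₁ ≫ A ◁ (S.j ▷ A ≫ (λ_ A).hom) ≫ S.m := by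
      simp [piL1]
    _ = (A ◁ (β_ A A).inv ≫ wl S.t₁ ≫ A ◁ (β_ A A).hom) ≫ ml S.m ≫ S.j ▷ A ≫ (λ_ A).hom := by
      rw [← S.ax8]; simp only [assoc]
    _ = _ := by
      rw [braiding_conj_wl]; simp only [assoc]

theorem wl_t₁_comp_counit : wl S.t₁ ≫ S.j ▷ (A ⊗ A) ≫ (λ_ (A ⊗ A)).hom = ml S.m := by
  rw [wl_comp_counit_left, ← S.hm₁]

theorem m_assoc : A ◁ S.m ≫ S.m = ml S.m ≫ S.m := by
  calc
    _ = A ◁ S.t₁ ≫ A ◁ S.piL1 ≫ S.m := by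
      rw [← whiskerLeft_comp_assoc, S.t₁_comp_piL1]
    _ = (A ◁ S.t₁ ≫ wl (β_ A A).hom ≫ A ◁ S.t₁ ≫ wl (β_ A A).inv ≫ wl S.t₁) ≫
        S.j ▷ (A ⊗ A) ≫ (λ_ (A ⊗ A)).hom ≫ S.j ▷ A ≫ (λ_ A).hom := by
      simp only [assoc, S.whiskerLeft_piL1_comp_m, reassoc_of% S.wl_t₁_comp_counit]
    _ = ml S.m ≫ S.t₁ ≫ S.j ▷ A ≫ (λ_ A).hom := by
      rw [S.ax1, assoc, reassoc_of% whiskerLeft_comp_counit_left,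
        reassoc_of% S.wl_t₁_comp_counit]
    _ = ml S.m ≫ S.m := by
      rw [← S.hm₁]

theorem whiskerLeft_m_comp_t₁ : A ◁ S.m ≫ S.t₁ = wl S.t₁ ≫ A ◁ S.m := by
  have hc12 := S.hc12
  have m_assoc := S.m_assoc
  simp only [wl, ml, assoc] at hc12 m_assoc ⊢
  apply S.ndl _ A S.memA
  dsimp only
  calc
    _ = A ◁ A ◁ S.m ≫ A ◁ S.t₁ ≫ (α_ A A A).inv ≫ S.m ▷ A := by monoidal
    _ = 𝟙 _ ⊗≫ ((A ⊗ A) ◁ S.m ≫ S.t₂ ▷ A) ⊗≫ A ◁ S.m := by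
      rw [hc12]; monoidal
    _ = 𝟙 _ ⊗≫ S.t₂ ▷ (A ⊗ A) ⊗≫ A ◁ (A ◁ S.m ≫ S.m) := by
      rw [whisker_exchange]; monoidal
    _ = 𝟙 _ ⊗≫ ((α_ A A A).inv ≫ S.t₂ ▷ A ≫ (α_ A A A).hom ≫ A ◁ S.m) ▷ A ⊗≫ A ◁ S.m := by
      rw [m_assoc]; monoidal
    _ = 𝟙 _ ⊗≫ A ◁ S.t₁ ▷ A ⊗≫ (S.m ▷ (A ⊗ A) ≫ A ◁ S.m) := by
      rw [← hc12]; monoidal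
    _ = _ := by
      rw [← whisker_exchange]; monoidal

theorem whiskerLeft_m_comp_piL1 : A ◁ S.m ≫ S.piL1 = ml S.piL1 ≫ S.m := by
  have piL1_m : A ◁ S.piL1 ≫ S.m = 𝟙 _ ⊗≫ (β_ A A).hom ▷ A ⊗≫ A ◁ S.t₁ ⊗≫
      ((β_ A A).inv ≫ S.m ≫ S.j) ▷ A ≫ (λ_ A).hom := by
    rw [S.whiskerLeft_piL1_comp_m]; simp only [wl, ml]; monoidal
  have m_assoc := S.m_assoc
  have whiskerLeft_m_comp_t₁ := S.whiskerLeft_m_comp_t₁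
  simp only [wl, ml] at m_assoc whiskerLeft_m_comp_t₁ ⊢
  apply S.ndl.cancel S.memI
  calc
    _ = A ◁ A ◁ S.m ≫ A ◁ S.piL1 ≫ S.m := by monoidal
    _ = 𝟙 _ ⊗≫ ((A ⊗ A) ◁ S.m ≫ (β_ A A).hom ▷ A) ⊗≫ A ◁ S.t₁ ⊗≫
        ((β_ A A).inv ≫ S.m ≫ S.j) ▷ A ≫ (λ_ A).hom := by
      rw [piL1_m]; monoidal
    _ = 𝟙 _ ⊗≫ (β_ A A).hom ▷ (A ⊗ A) ⊗≫ A ◁ (A ◁ S.m ≫ S.t₁) ⊗≫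
        ((β_ A A).inv ≫ S.m ≫ S.j) ▷ A ≫ (λ_ A).hom := by
      rw [whisker_exchange]; monoidal
    _ = 𝟙 _ ⊗≫ (β_ A A).hom ▷ (A ⊗ A) ⊗≫ A ◁ S.t₁ ▷ A ⊗≫
        ((A ⊗ A) ◁ S.m ≫ ((β_ A A).inv ≫ S.m ≫ S.j) ▷ A) ≫ (λ_ A).hom := by
      rw [whiskerLeft_m_comp_t₁]; monoidal
    _ = 𝟙 _ ⊗≫ (𝟙 (A ⊗ (A ⊗ A)) ⊗≫ (β_ A A).hom ▷ A ⊗≫ A ◁ S.t₁ ⊗≫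
        ((β_ A A).inv ≫ S.m ≫ S.j) ▷ A ≫ (λ_ A).hom) ▷ A ≫ S.m := by
      rw [whisker_exchange]; monoidal
    _ = 𝟙 _ ⊗≫ A ◁ S.piL1 ▷ A ⊗≫ (α_ A A A).inv ≫ S.m ▷ A ≫ S.m := by
      rw [← piL1_m]; monoidal
    _ = _ := by
      rw [← assoc (α_ A A A).inv, ← m_assoc]; monoidal

theorem whiskerLeft_t₁_comp_ml_piL1_counit :
    A ◁ S.t₁ ≫ ml S.piL1 ≫ S.j ▷ A ≫ (λ_ A).hom = A ◁ S.m ≫ S.piL1 := by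
  have wl_e₁_counit : wl S.e₁ ≫ S.j ▷ (A ⊗ A) ≫ (λ_ (A ⊗ A)).hom = ml S.piL1 :=
    wl_comp_counit_left S.e₁ S.j
  calc
    _ = (A ◁ S.t₁ ≫ wl S.e₁) ≫ S.j ▷ (A ⊗ A) ≫ (λ_ (A ⊗ A)).hom ≫ S.j ▷ A ≫ (λ_ A).hom := by
      rw [assoc, reassoc_of% wl_e₁_counit]
    _ = ml S.piL1 ≫ S.t₁ ≫ S.j ▷ A ≫ (λ_ A).hom := by
      rw [S.ax5, assoc, reassoc_of% whiskerLeft_comp_counit_left, reassoc_of% wl_e₁_counit]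
    _ = _ := by
      rw [← S.hm₁, S.whiskerLeft_m_comp_piL1]

theorem ml_m_comp_e₁ :
    ml S.m ≫ S.e₁ = A ◁ (β_ A A).inv ≫ wl S.e₁ ≫ A ◁ (β_ A A).hom ≫ ml S.m := by
  rw [← S.wl_t₁_comp_counit]
  simpa only [assoc, whiskerLeft_comp_counit_left] using
    S.ax6 =≫ (S.j ▷ (A ⊗ A) ≫ (λ_ (A ⊗ A)).hom)

theorem whiskerLeft_e₁_comp_wl_t₄ : A ◁ S.e₁ ≫ wl S.t₄ = wl S.t₄ ≫ A ◁ S.e₁ := by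
  have hc14 := S.hc14
  have e₁_t₁ : wl S.e₁ ≫ A ◁ (β_ A A).hom ≫ wl S.t₁ =
      A ◁ (β_ A A).hom ≫ wl S.t₁ ≫ A ◁ S.e₁ := by
    simp [S.ax6]
  have e₁_m : wl S.e₁ ≫ A ◁ (β_ A A).hom ≫ ml S.m = A ◁ (β_ A A).hom ≫ ml S.m ≫ S.e₁ := by
    simp [S.ml_m_comp_e₁]
  simp only [wl, ml, assoc] at hc14 e₁_t₁ e₁_m ⊢
  apply S.ndr.cancel_middle S.memAA
  calc
    _ = 𝟙 _ ⊗≫ A ◁ S.e₁ ▷ A ⊗≫ (S.t₄ ▷ (A ⊗ A) ≫ (A ⊗ A) ◁ (β_ A A).hom) ⊗≫ A ◁ S.m ▷ A := by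
      monoidal
    _ = 𝟙 _ ⊗≫ A ◁ S.e₁ ▷ A ⊗≫ (A ⊗ A) ◁ (β_ A A).hom ⊗≫
        ((α_ A A A).inv ≫ S.t₄ ▷ A ≫ (α_ A A A).hom ≫ A ◁ S.m) ▷ A ≫ (α_ A A A).hom := by
      rw [← whisker_exchange]; monoidal
    _ = 𝟙 _ ⊗≫ A ◁ ((α_ A A A).inv ≫ S.e₁ ▷ A ≫ (α_ A A A).hom ≫ A ◁ (β_ A A).hom ≫
        (α_ A A A).inv ≫ S.t₁ ▷ A ≫ (α_ A A A).hom) ⊗≫ ((β_ A A).hom ≫ S.m) ▷ (A ⊗ A) := by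
      rw [← hc14]; monoidal
    _ = 𝟙 _ ⊗≫ A ◁ A ◁ (β_ A A).hom ⊗≫ A ◁ S.t₁ ▷ A ⊗≫
        ((A ⊗ A) ◁ S.e₁ ≫ ((β_ A A).hom ≫ S.m) ▷ (A ⊗ A)) := by
      rw [e₁_t₁]; monoidal
    _ = 𝟙 _ ⊗≫ A ◁ A ◁ (β_ A A).hom ⊗≫ (A ◁ S.t₁ ≫ (α_ A A A).inv ≫ (β_ A A).hom ▷ A ≫
        (α_ A A A).hom ≫ (α_ A A A).inv ≫ S.m ▷ A) ▷ A ⊗≫ A ◁ S.e₁ := by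
      rw [whisker_exchange]; monoidal
    _ = 𝟙 _ ⊗≫ ((A ⊗ A) ◁ (β_ A A).hom ≫ S.t₄ ▷ (A ⊗ A)) ⊗≫ A ◁ (S.m ▷ A ≫ S.e₁) := by
      rw [hc14]; monoidal
    _ = 𝟙 _ ⊗≫ S.t₄ ▷ (A ⊗ A) ⊗≫
        A ◁ (A ◁ (β_ A A).hom ≫ (α_ A A A).inv ≫ S.m ▷ A ≫ S.e₁) := by
      rw [whisker_exchange]; monoidal
    _ = _ := by
      rw [← e₁_m]; monoidal

theorem wl_t₄_comp_piL1 : wl ((β_ A A).hom ≫ S.t₄) ≫ A ◁ S.piL1 = ml S.m ≫ S.e₁ := by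
  have t₄_counit : S.t₄ ≫ A ◁ S.j ≫ (ρ_ A).hom = (β_ A A).inv ≫ S.m := by
    rw [Iso.eq_inv_comp, ← S.hm₄]
  calc
    _ = wl (β_ A A).hom ≫ A ◁ S.e₁ ≫ wl S.t₄ ≫ A ◁ (S.j ▷ A ≫ (λ_ A).hom) := by
      rw [wl_comp, piL1, whiskerLeft_comp, assoc, ← reassoc_of% S.whiskerLeft_e₁_comp_wl_t₄]
    _ = (wl (β_ A A).hom ≫ A ◁ S.e₁ ≫ wl (β_ A A).inv) ≫ ml S.m := by
      rw [wl_comp_counit_middle, t₄_counit, ml_comp]; simp only [assoc]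
    _ = ml S.m ≫ S.e₁ := by
      rw [← braiding_conj_wl, S.ml_m_comp_e₁]; simp only [assoc]

end RWMB

section Coaction

variable {D : Type*} [Category D] [MonoidalCategory D] {L : D}

/-- The left action `(ε ∘ μ ⊗ 1) ∘ (1 ⊗ τ)` of `L` on `W` induced by a left coaction `τ`. For the
paper's coaction `τ : A ⟶ L ⊗ A` it is the morphism `n₁`. -/
def coactionAction (μ : L ⊗ L ⟶ L) (ε : L ⟶ 𝟙_ D) {W : D} (τ : W ⟶ L ⊗ W) : L ⊗ W ⟶ W :=
  L ◁ τ ≫ (α_ L L W).inv ≫ (μ ≫ ε) ▷ W ≫ (λ_ W).hom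

variable (μ : L ⊗ L ⟶ L) (ε : L ⟶ 𝟙_ D)

theorem whiskerLeft_comp_coactionAction {A W : D} {w : A ⊗ W ⟶ W} {τ : A ⟶ L ⊗ A}
    {τW : W ⟶ L ⊗ W} (hw : w ≫ τW = τ ▷ W ≫ (α_ L A W).hom ≫ L ◁ w) :
    L ◁ w ≫ coactionAction μ ε τW = (α_ L A W).inv ≫ coactionAction μ ε τ ▷ W ≫ w := by
  simp only [coactionAction]
  calc
    _ = L ◁ (w ≫ τW) ≫ (α_ L L W).inv ≫ (μ ≫ ε) ▷ W ≫ (λ_ W).hom := by monoidal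
    _ = 𝟙 _ ⊗≫ L ◁ τ ▷ W ⊗≫ ((L ⊗ L) ◁ w ≫ (μ ≫ ε) ▷ W) ≫ (λ_ W).hom := by
      rw [hw]; monoidal
    _ = _ := by
      rw [whisker_exchange]; monoidal

theorem sIdem_eq_coactionAction {V W : D} (τV : V ⟶ V ⊗ L) (τW : W ⟶ L ⊗ W) :
    sIdem μ ε τV τW = τV ▷ W ≫ (α_ V L W).hom ≫ V ◁ coactionAction μ ε τW := by
  simp only [sIdem, coactionAction]
  monoidal

end Coaction

section ActPair

variable {A V W : C} {v : A ⊗ V ⟶ V} {w : A ⊗ W ⟶ W}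

theorem actPair_eq_tensorμ_comp (v : A ⊗ V ⟶ V) (w : A ⊗ W ⟶ W) :
    actPair v w = tensorμ A A V W ≫ (v ⊗ₘ w) := by
  simp only [actPair, tensorμ, MonoidalCategory.tensorHom_def, assoc]

theorem actPair_assoc {m : A ⊗ A ⟶ A} (hv : A ◁ v ≫ v = (α_ A A V).inv ≫ m ▷ V ≫ v)
    (hw : A ◁ w ≫ w = (α_ A A W).inv ≫ m ▷ W ≫ w) :
    (A ⊗ A) ◁ actPair v w ≫ actPair v w =
      (α_ (A ⊗ A) (A ⊗ A) (V ⊗ W)).inv ≫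
        (midSw A ≫ m ▷ (A ⊗ A) ≫ A ◁ m) ▷ (V ⊗ W) ≫ actPair v w := by
  rw [← cancel_epi (α_ (A ⊗ A) (A ⊗ A) (V ⊗ W)).hom, Iso.hom_inv_id_assoc,
    ← MonoidalCategory.tensorHom_def]
  simp only [actPair_eq_tensorμ_comp, whiskerLeft_comp, comp_whiskerRight, assoc]
  calc
    _ = (α_ (A ⊗ A) (A ⊗ A) (V ⊗ W)).hom ≫ (A ⊗ A) ◁ tensorμ A A V W ≫
        tensorμ A A (A ⊗ V) (A ⊗ W) ≫ (A ◁ v ≫ v ⊗ₘ A ◁ w ≫ w) := by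
      rw [tensorμ_natural_right_assoc, tensorHom_comp_tensorHom]
    _ = tensorμ A A A A ▷ (V ⊗ W) ≫ tensorμ (A ⊗ A) (A ⊗ A) V W ≫
        (m ▷ V ≫ v ⊗ₘ m ▷ W ≫ w) := by
      rw [← tensor_associativity_assoc, tensorHom_comp_tensorHom, hv, hw,
        Iso.hom_inv_id_assoc, Iso.hom_inv_id_assoc]
    _ = tensorμ A A A A ▷ (V ⊗ W) ≫ (m ⊗ₘ m) ▷ (V ⊗ W) ≫ tensorμ A A V W ≫ (v ⊗ₘ w) := by
      rw [tensorμ_natural_left_assoc, tensorHom_comp_tensorHom]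
    _ = _ := rfl

theorem actPair_comp_sIdem {L : C} (μ : L ⊗ L ⟶ L) (ε : L ⟶ 𝟙_ C) {τ : A ⟶ L ⊗ A}
    {τbar : A ⟶ A ⊗ L} {τV : V ⟶ V ⊗ L} {τW : W ⟶ L ⊗ W}
    (hv : v ≫ τV = τbar ▷ V ≫ (α_ A L V).hom ≫ A ◁ (β_ L V).hom ≫ (α_ A V L).inv ≫ v ▷ L)
    (hw : w ≫ τW = τ ▷ W ≫ (α_ L A W).hom ≫ L ◁ w) :
    actPair v w ≫ sIdem μ ε τV τW =
      (τbar ▷ A ≫ (α_ A L A).hom ≫ A ◁ coactionAction μ ε τ) ▷ (V ⊗ W) ≫ actPair v w := by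
  have action_w := whiskerLeft_comp_coactionAction μ ε hw
  have braiding_action :
      coactionAction μ ε τ ▷ V ≫ (β_ A V).hom = 𝟙 _ ⊗≫ L ◁ (β_ A V).hom ⊗≫
        (β_ L V).hom ▷ A ⊗≫ V ◁ coactionAction μ ε τ := by
    rw [BraidedCategory.braiding_naturality_left, BraidedCategory.braiding_tensor_left_hom]
    monoidal
  rw [sIdem_eq_coactionAction]
  generalize coactionAction μ ε τ = n at action_w braiding_action ⊢
  generalize coactionAction μ ε τW = nW at action_w ⊢
  simp only [actPair]
  calc
    _ = 𝟙 _ ⊗≫ A ◁ (β_ A V).hom ▷ W ⊗≫ v ▷ (A ⊗ W) ⊗≫ (V ◁ w ≫ τV ▷ W) ⊗≫ V ◁ nW := by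
      monoidal
    _ = 𝟙 _ ⊗≫ A ◁ (β_ A V).hom ▷ W ⊗≫ (v ≫ τV) ▷ (A ⊗ W) ⊗≫ V ◁ (L ◁ w ≫ nW) := by
      rw [whisker_exchange]; monoidal
    _ = 𝟙 _ ⊗≫ (A ◁ (β_ A V).hom ▷ W ≫ τbar ▷ ((V ⊗ A) ⊗ W)) ⊗≫
        A ◁ (β_ L V).hom ▷ (A ⊗ W) ⊗≫ (v ▷ ((L ⊗ A) ⊗ W) ≫ V ◁ n ▷ W) ⊗≫ V ◁ w := by
      rw [hv, action_w]; monoidal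
    _ = 𝟙 _ ⊗≫ τbar ▷ ((A ⊗ V) ⊗ W) ⊗≫
        A ◁ (𝟙 ((L ⊗ A) ⊗ V) ⊗≫ L ◁ (β_ A V).hom ⊗≫ (β_ L V).hom ▷ A ⊗≫ V ◁ n) ▷ W ⊗≫
        v ▷ (A ⊗ W) ⊗≫ V ◁ w := by
      rw [whisker_exchange, ← whisker_exchange v]; monoidal
    _ = _ := by
      rw [← braiding_action]; monoidal

end ActPair

namespace RWMB

variable {A : C} {𝒴 : Set C} (S : RWMB A 𝒴)

theorem coactionAction_eq_n₁
    [∀ X : C, PreservesColimitsOfShape WalkingParallelPair (tensorLeft X)]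
    [∀ X : C, PreservesColimitsOfShape WalkingParallelPair (tensorRight X)]
    [IsRegularEpi S.m] {L : C} {p : A ⟶ L} [IsRegularEpi p] {n₁ : L ⊗ A ⟶ A}
    (hn₁ : p ▷ A ≫ n₁ = S.piL1) {μ : L ⊗ L ⟶ L} (hμ : L ◁ p ≫ μ = n₁ ≫ p)
    {ε : L ⟶ 𝟙_ C} (hε : p ≫ ε = S.j) {τ : A ⟶ L ⊗ A} (hτ : S.m ≫ τ = S.t₁ ≫ p ▷ A) :
    coactionAction μ ε τ = n₁ := by
  have piL1_counit : p ▷ A ≫ L ◁ p ≫ μ ≫ ε = S.piL1 ≫ S.j := by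
    rw [reassoc_of% hμ, reassoc_of% hn₁, hε]
  rw [← cancel_epi (L ◁ S.m), ← cancel_epi (p ▷ (A ⊗ A)), coactionAction]
  calc
    _ = p ▷ (A ⊗ A) ≫ L ◁ (S.m ≫ τ) ≫ (α_ L L A).inv ≫ (μ ≫ ε) ▷ A ≫ (λ_ A).hom := by
      monoidal
    _ = (p ▷ (A ⊗ A) ≫ L ◁ S.t₁) ≫ L ◁ p ▷ A ≫ (α_ L L A).inv ≫ (μ ≫ ε) ▷ A ≫ (λ_ A).hom := by
      rw [hτ]; monoidal
    _ = A ◁ S.t₁ ≫ (α_ A A A).inv ≫ (p ▷ A ≫ L ◁ p ≫ μ ≫ ε) ▷ A ≫ (λ_ A).hom := by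
      rw [← whisker_exchange]; monoidal
    _ = A ◁ S.t₁ ≫ ml S.piL1 ≫ S.j ▷ A ≫ (λ_ A).hom := by
      rw [piL1_counit, ml]; monoidal
    _ = A ◁ S.m ≫ p ▷ A ≫ n₁ := by
      rw [S.whiskerLeft_t₁_comp_ml_piL1_counit, hn₁]
    _ = _ := by
      rw [whisker_exchange_assoc]

theorem τbar_comp_n₁
    [∀ X : C, PreservesColimitsOfShape WalkingParallelPair (tensorRight X)]
    [IsRegularEpi S.m] {L : C} {p : A ⟶ L} {n₁ : L ⊗ A ⟶ A} (hn₁ : p ▷ A ≫ n₁ = S.piL1)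
    {τbar : A ⟶ A ⊗ L} (hτbar : S.m ≫ τbar = (β_ A A).hom ≫ S.t₄ ≫ A ◁ p) :
    τbar ▷ A ≫ (α_ A L A).hom ≫ A ◁ n₁ = S.e₁ := by
  have wl_t₄_comp_piL1 := S.wl_t₄_comp_piL1
  simp only [wl, ml, ← hn₁, assoc, cancel_epi] at wl_t₄_comp_piL1
  rw [← cancel_epi (S.m ▷ A), ← wl_t₄_comp_piL1, ← comp_whiskerRight_assoc, hτbar]
  monoidal

theorem whiskerLeft_comp_actPair_of_actPair_comp {V W : C} {v : A ⊗ V ⟶ V} {w : A ⊗ W ⟶ W}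
    (hv : A ◁ v ≫ v = (α_ A A V).inv ≫ S.m ▷ V ≫ v)
    (hw : A ◁ w ≫ w = (α_ A A W).inv ≫ S.m ▷ W ≫ w) [Epi ((A ⊗ A) ◁ actPair v w)]
    {s : V ⊗ W ⟶ V ⊗ W} (hs : actPair v w ≫ s = S.e₁ ▷ (V ⊗ W) ≫ actPair v w) :
    (A ⊗ A) ◁ s ≫ actPair v w = S.e₂ ▷ (V ⊗ W) ≫ actPair v w := by
  have assoc_pair := actPair_assoc hv hw
  rw [← cancel_epi ((A ⊗ A) ◁ actPair v w)]
  calc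
    _ = (A ⊗ A) ◁ S.e₁ ▷ (V ⊗ W) ≫ (A ⊗ A) ◁ actPair v w ≫ actPair v w := by
      rw [← whiskerLeft_comp_assoc, hs, whiskerLeft_comp_assoc]
    _ = (α_ (A ⊗ A) (A ⊗ A) (V ⊗ W)).inv ≫
        ((A ⊗ A) ◁ S.e₁ ≫ midSw A ≫ S.m ▷ (A ⊗ A) ≫ A ◁ S.m) ▷ (V ⊗ W) ≫ actPair v w := by
      rw [assoc_pair]; monoidal
    _ = S.e₂ ▷ ((A ⊗ A) ⊗ (V ⊗ W)) ≫ (A ⊗ A) ◁ actPair v w ≫ actPair v w := by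
      rw [S.hecomp, assoc_pair]; monoidal
    _ = _ := by
      rw [whisker_exchange_assoc]

end RWMB

theorem lemma_idempotent_e₁_e₂_general
    [∀ X : C, PreservesColimitsOfShape WalkingParallelPair (tensorLeft X)]
    [∀ X : C, PreservesColimitsOfShape WalkingParallelPair (tensorRight X)]
    {A : C} {𝒴 : Set C} (S : RWMB A 𝒴) [IsRegularEpi S.m]
    {L : C} (p : A ⟶ L) [IsRegularEpi p]
    {n₁ : L ⊗ A ⟶ A} (hn₁ : p ▷ A ≫ n₁ = S.piL1)
    {μ : L ⊗ L ⟶ L} (hμ : L ◁ p ≫ μ = n₁ ≫ p) {ε : L ⟶ 𝟙_ C} (hε : p ≫ ε = S.j)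
    {τ : A ⟶ L ⊗ A} (hτ : S.m ≫ τ = S.t₁ ≫ p ▷ A)
    {τbar : A ⟶ A ⊗ L} (hτbar : S.m ≫ τbar = (β_ A A).hom ≫ S.t₄ ≫ A ◁ p)
    {V W : C} {v : A ⊗ V ⟶ V} {w : A ⊗ W ⟶ W} [IsRegularEpi v] [IsRegularEpi w]
    (hv : A ◁ v ≫ v = (α_ A A V).inv ≫ S.m ▷ V ≫ v)
    (hw : A ◁ w ≫ w = (α_ A A W).inv ≫ S.m ▷ W ≫ w)
    {τV : V ⟶ V ⊗ L} {τW : W ⟶ L ⊗ W}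
    (hτV : v ≫ τV = τbar ▷ V ≫ (α_ A L V).hom ≫ A ◁ (β_ L V).hom ≫ (α_ A V L).inv ≫ v ▷ L)
    (hτW : w ≫ τW = τ ▷ W ≫ (α_ L A W).hom ≫ L ◁ w) :
    actPair v w ≫ sIdem μ ε τV τW = S.e₁ ▷ (V ⊗ W) ≫ actPair v w ∧
      (A ⊗ A) ◁ sIdem μ ε τV τW ≫ actPair v w = S.e₂ ▷ (V ⊗ W) ≫ actPair v w := by
  have e₁_eq : τbar ▷ A ≫ (α_ A L A).hom ≫ A ◁ coactionAction μ ε τ = S.e₁ := by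
    rw [S.coactionAction_eq_n₁ hn₁ hμ hε hτ, S.τbar_comp_n₁ hn₁ hτbar]
  have s_e₁ : actPair v w ≫ sIdem μ ε τV τW = S.e₁ ▷ (V ⊗ W) ≫ actPair v w := by
    rw [actPair_comp_sIdem μ ε hτV hτW, e₁_eq]
  have : Epi ((A ⊗ A) ◁ actPair v w) := by
    simp only [actPair, whiskerLeft_comp]
    infer_instance
  exact ⟨s_e₁, S.whiskerLeft_comp_actPair_of_actPair_comp hv hw s_e₁⟩

/-- Lemma 4.5: for `A`-modules `(V, v)` and `(W, w)`, the canonical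
idempotent `s` on `V ⊗ W` interacts with `e₁` and `e₂` as stated. -/
theorem lemma_idempotent_e₁_e₂
    [HasCoequalizers C]
    (presL : ∀ X : C, PreservesColimitsOfShape WalkingParallelPair (tensorLeft X))
    (presR : ∀ X : C, PreservesColimitsOfShape WalkingParallelPair (tensorRight X))
    (regcomp : ∀ {X Y Z : C} (f : X ⟶ Y) (g : Y ⟶ Z),
      Nonempty (RegularEpi f) → Nonempty (RegularEpi g) → Nonempty (RegularEpi (f ≫ g)))
    {A : C} {𝒴 : Set C} (S : RWMB A 𝒴)
    (hmreg : Nonempty (RegularEpi S.m))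
    (hclosed : ∀ Y Y' : C, Y ∈ 𝒴 → Y' ∈ 𝒴 → (Y ⊗ Y') ∈ 𝒴)
    (L : C) (p : A ⟶ L)
    (hpc : S.piL1 ≫ p = S.piBarR1c ≫ p)
    (hpu : ∀ {X : C} (h : A ⟶ X), S.piL1 ≫ h = S.piBarR1c ≫ h →
      ∃! k : L ⟶ X, p ≫ k = h)
    (memL : L ∈ 𝒴)
    (n₁ : L ⊗ A ⟶ A) (hn₁ : (p ▷ A) ≫ n₁ = S.piL1)
    (hndn₁ : NdRightOn n₁ 𝒴)
    (n₂ : A ⊗ L ⟶ A) (hn₂ : (A ◁ p) ≫ n₂ = S.piL2)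
    (μ : L ⊗ L ⟶ L) (hμ : (L ◁ p) ≫ μ = n₁ ≫ p)
    (δ : L ⟶ L ⊗ L) (hδ : S.m ≫ p ≫ δ = S.t₁ ≫ (p ▷ A) ≫ (L ◁ p))
    (ε : L ⟶ 𝟙_ C) (hε : p ≫ ε = S.j)
    (hμδ : δ ≫ μ = 𝟙 L)
    (τ : A ⟶ L ⊗ A) (hτ : S.m ≫ τ = S.t₁ ≫ (p ▷ A))
    (τbar : A ⟶ A ⊗ L) (hτbar : S.m ≫ τbar = (β_ A A).hom ≫ S.t₄ ≫ (A ◁ p))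
    -- two `A`-modules, with the right coaction on `V` and the left coaction on `W`
    (M N : AModule A S.m 𝒴)
    (τbM : M.V ⟶ M.V ⊗ L)
    (hτbM : M.act ≫ τbM = (τbar ▷ M.V) ≫ (α_ A L M.V).hom ≫ (A ◁ (β_ L M.V).hom) ≫
      (α_ A M.V L).inv ≫ (M.act ▷ L))
    (τN : N.V ⟶ L ⊗ N.V)
    (hτN : N.act ≫ τN = (τ ▷ N.V) ≫ (α_ L A N.V).hom ≫ (L ◁ N.act)) :
    -- (i)  `s ∘ (v ⊗ w) ∘ (1 ⊗ c ⊗ 1) = (v ⊗ w) ∘ (1 ⊗ c ⊗ 1) ∘ (e₁ ⊗ 1 ⊗ 1)`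
    (actPair M.act N.act ≫ sIdem μ ε τbM τN
      = (S.e₁ ▷ (M.V ⊗ N.V)) ≫ actPair M.act N.act) ∧
    -- (ii) `(v ⊗ w) ∘ (1 ⊗ c ⊗ 1) ∘ (1 ⊗ 1 ⊗ s) = (v ⊗ w) ∘ (1 ⊗ c ⊗ 1) ∘ (e₂ ⊗ 1 ⊗ 1)`
    (((A ⊗ A) ◁ sIdem μ ε τbM τN) ≫ actPair M.act N.act
      = (S.e₂ ▷ (M.V ⊗ N.V)) ≫ actPair M.act N.act) := by
  have : IsRegularEpi p := isRegularEpi_of_existsUnique hpc hpu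
  have : IsRegularEpi S.m := ⟨hmreg⟩
  have : IsRegularEpi M.act := ⟨M.regEpi⟩
  have : IsRegularEpi N.act := ⟨N.regEpi⟩
  exact lemma_idempotent_e₁_e₂_general S p hn₁ hμ hε hτ hτbar M.assoc N.assoc hτbM hτN

end WeakMultiplierBimonoid
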